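/- Suppose δ_R > τ_R²/4 and (g_R^{−i}(0,0))₂ < 0 for every integer i ≥ 1. Then for every integer q ≥ 2, the point g_R^{−q}(0,0) belongs to the topological boundary of E_{q−1}, and g_R^{−q}(0,0) does not belong to the closure of E_i for any 1 ≤ i ≤ q−2. -/

import Mathlib

/-!
Write `p_i = g_R^{-i}(0,0)`, so `p_1 = (0,-1)`. Since `(p_{i+1})₁ = -(p_i)₂ / δ_R`, the hypothesis puts
`p_2, p_3, …` strictly inside `Π_R`, with `p_1` on its boundary. Hence `g` undoes `g_R^{-1}` along
this backward orbit: `g^i(p_q) = p_{q-i}` for `i ≤ q - 1` (`iterate_gB_iterate_gRinv`).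

For `1 ≤ i ≤ q - 2` this gives `(g^i(p_q))₁ > 0`; as `g` is continuous (`continuous_gB`), the open set
`{x | (g^i(x))₁ > 0}` is a neighbourhood of `p_q` that misses `E_i`.

For `i = q - 1` it gives `(g^{q-1}(p_q))₁ = 0`, so `p_q ∉ E_{q-1}`. On the other hand, for small `ε > 0`
the points `g_R^{-j}(-ε,-1)`, `1 ≤ j ≤ q - 1`, remain in `Π_R`, so `g_R^{-(q-1)}(-ε,-1)` lies in `E_{q-1}`,
and these points converge to `p_q` as `ε → 0`.
-/

/-- The two-dimensional border-collision normal form (BCNF). -/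
noncomputable def gB (τL δL τR δR : ℝ) (x : ℝ × ℝ) : ℝ × ℝ :=
  if x.1 ≤ 0 then (τL * x.1 + x.2 + 1, -δL * x.1)
  else (τR * x.1 + x.2 + 1, -δR * x.1)

/-- The inverse of the right component `g_R` (valid when `δR ≠ 0`). -/
noncomputable def gRinv (τR δR : ℝ) (x : ℝ × ℝ) : ℝ × ℝ :=
  (-x.2 / δR, x.1 + τR * x.2 / δR - 1)

/-- `χ_R(x) = q`: `q ≥ 1` is the smallest integer with `g^q(x) ∉ Π_R`. -/
def chiReq (g : ℝ × ℝ → ℝ × ℝ) (q : ℕ) (x : ℝ × ℝ) : Prop :=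
  1 ≤ q ∧ (g^[q] x).1 < 0 ∧ ∀ i, 1 ≤ i → i < q → 0 ≤ (g^[i] x).1

/-- `E_q = {x ∈ Π_R : χ_R(x) = q}`. -/
def Eset (g : ℝ × ℝ → ℝ × ℝ) (q : ℕ) : Set (ℝ × ℝ) :=
  {x | 0 ≤ x.1 ∧ chiReq g q x}

open Filter Topology

theorem continuous_gB (τL δL τR δR : ℝ) : Continuous (gB τL δL τR δR) := by
  unfold gB
  refine Continuous.if_le (by fun_prop) (by fun_prop) (by fun_prop) (by fun_prop) ?_
  intro x hx
  simp [hx]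

theorem continuous_gRinv (τR δR : ℝ) : Continuous (gRinv τR δR) := by
  unfold gRinv
  simp only [div_eq_mul_inv]
  fun_prop

/-- `gRinv` is a right inverse of `g` at every point that it sends into `Π_R`. -/
theorem gB_gRinv (τL δL τR δR : ℝ) (hδ : δR ≠ 0) (z : ℝ × ℝ)
    (hz : 0 ≤ (gRinv τR δR z).1) : gB τL δL τR δR (gRinv τR δR z) = z := by
  by_cases h : (gRinv τR δR z).1 ≤ 0
  -- On the line `x₁ = 0` the map `gB` uses its left branch, which agrees there with the right one.
  · have h0 : -z.2 / δR = 0 := le_antisymm h hz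
    have h2 : z.2 = 0 := by
      rcases div_eq_zero_iff.1 h0 with h | h
      · linarith
      · exact absurd h hδ
    ext <;> simp [gB, gRinv, h2]
  · simp only [gB, if_neg h]
    ext
    · simp only [gRinv]
      field_simp
      ring
    · simp only [gRinv]
      field_simp

/-- As long as a backward `g_R`-orbit stays in `Π_R`, the map `g` retraces it. -/
theorem iterate_gB_iterate_gRinv (τL δL τR δR : ℝ) (hδ : δR ≠ 0) (z : ℝ × ℝ) (n : ℕ)
    (hz : ∀ j, 1 ≤ j → j ≤ n → 0 ≤ ((gRinv τR δR)^[j] z).1) (i : ℕ) (hi : i ≤ n) :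
    (gB τL δL τR δR)^[i] ((gRinv τR δR)^[n] z) = (gRinv τR δR)^[n - i] z := by
  induction i with
  | zero => rfl
  | succ k ih =>
    rw [Function.iterate_succ_apply', ih (by omega)]
    have hk : n - k = (n - (k + 1)) + 1 := by omega
    have h := hz (n - k) (by omega) (by omega)
    rw [hk, Function.iterate_succ_apply'] at h ⊢
    exact gB_gRinv τL δL τR δR hδ _ h

/-- Suppose `δ_R > τ_R²/4` and `(g_R^{-i}(0,0))₂ < 0` for every `i ≥ 1`.  Then for
every `q ≥ 2` the point `g_R^{-q}(0,0)` belongs to the topological boundary of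
`E_{q−1}` and does not belong to the closure of `E_i` for any `1 ≤ i ≤ q−2`. -/
theorem stmt17 (τL δL τR δR : ℝ) (hfocus : τR ^ 2 / 4 < δR)
    (hback : ∀ i : ℕ, 1 ≤ i → ((gRinv τR δR)^[i] ((0, 0) : ℝ × ℝ)).2 < 0) :
    ∀ q : ℕ, 2 ≤ q →
      (gRinv τR δR)^[q] ((0, 0) : ℝ × ℝ) ∈ frontier (Eset (gB τL δL τR δR) (q - 1)) ∧
      ∀ i : ℕ, 1 ≤ i → i ≤ q - 2 →
        (gRinv τR δR)^[q] ((0, 0) : ℝ × ℝ) ∉ closure (Eset (gB τL δL τR δR) i) := by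
  have hδ : 0 < δR := lt_of_le_of_lt (by positivity) hfocus
  have h1 : gRinv τR δR (0, 0) = (0, -1) := by simp [gRinv]
  have hpos : ∀ j : ℕ, 1 ≤ j → 0 < ((gRinv τR δR)^[j] ((0, -1) : ℝ × ℝ)).1 := by
    intro j hj
    obtain ⟨k, rfl⟩ : ∃ k, j = k + 1 := ⟨j - 1, by omega⟩
    have h := hback (k + 1) (by omega)
    rw [Function.iterate_succ_apply, h1] at h
    rw [Function.iterate_succ_apply']
    exact div_pos (by linarith) hδ
  intro q hq
  obtain ⟨n, rfl⟩ : ∃ n, q = n + 2 := ⟨q - 2, by omega⟩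
  have hfwd : ∀ i ≤ n + 1, (gB τL δL τR δR)^[i] ((gRinv τR δR)^[n + 1] ((0, -1) : ℝ × ℝ)) =
      (gRinv τR δR)^[n + 1 - i] (0, -1) := fun i hi =>
    iterate_gB_iterate_gRinv τL δL τR δR hδ.ne' _ _ (fun j hj _ => (hpos j hj).le) i hi
  rw [show n + 2 = (n + 1) + 1 from rfl, Function.iterate_succ_apply, h1, Nat.add_sub_cancel]
  refine ⟨⟨?_, fun hint => ?_⟩, ?_⟩
  · -- `c ε` is the perturbed base point `(-ε, -1)`.
    let c : ℝ → ℝ × ℝ := fun ε => (-ε, -1)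
    have hc : ∀ j : ℕ, Tendsto (fun ε => (gRinv τR δR)^[j] (c ε)) (𝓝[>] 0)
        (𝓝 ((gRinv τR δR)^[j] (0, -1))) := by
      intro j
      have hcont : Continuous fun ε => (gRinv τR δR)^[j] (c ε) :=
        ((continuous_gRinv τR δR).iterate j).comp (by fun_prop)
      have h := (hcont.tendsto 0).mono_left (nhdsWithin_le_nhds (s := Set.Ioi 0))
      simpa [c] using h
    have hev : ∀ᶠ ε in 𝓝[>] (0 : ℝ), ∀ j ∈ Finset.Icc 1 (n + 1),
        0 < ((gRinv τR δR)^[j] (c ε)).1 := by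
      rw [Filter.eventually_all_finset]
      intro j hj
      exact ((continuous_fst.tendsto _).comp (hc j)).eventually
        (lt_mem_nhds (hpos j (Finset.mem_Icc.1 hj).1))
    refine mem_closure_of_tendsto (hc (n + 1)) ?_
    filter_upwards [hev, self_mem_nhdsWithin] with ε hε hε0
    have hε' : ∀ j, 1 ≤ j → j ≤ n + 1 → 0 < ((gRinv τR δR)^[j] (c ε)).1 :=
      fun j h1 h2 => hε j (Finset.mem_Icc.2 ⟨h1, h2⟩)
    have hfw := iterate_gB_iterate_gRinv τL δL τR δR hδ.ne' (c ε) (n + 1)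
      (fun j h1 h2 => (hε' j h1 h2).le)
    refine ⟨(hε' (n + 1) (by omega) le_rfl).le, by omega, ?_, fun i hi1 hi2 => ?_⟩
    · rw [hfw (n + 1) le_rfl, Nat.sub_self]
      exact neg_lt_zero.2 hε0
    · rw [hfw i hi2.le]
      exact (hε' _ (by omega) (by omega)).le
  · have h := (interior_subset hint).2.2.1
    rw [hfwd (n + 1) le_rfl, Nat.sub_self] at h
    exact lt_irrefl _ h
  · intro i hi1 hi2 hcl
    have hopen : IsOpen {x : ℝ × ℝ | 0 < ((gB τL δL τR δR)^[i] x).1} :=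
      isOpen_lt continuous_const
        (continuous_fst.comp ((continuous_gB τL δL τR δR).iterate i))
    obtain ⟨x, hx, hxE⟩ := mem_closure_iff.1 hcl _ hopen (by
      rw [Set.mem_ofPred_eq, hfwd i (by omega)]
      exact hpos _ (by omega))
    exact lt_asymm hx hxE.2.2.1
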